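/- Let s be a sequence of length L = R·C over n-th roots of unity whose R × C array is given by S_{i,j} = ω^{p(i,j)} for ω = e^{2πi/n} and p ∈ ℤ[x,y]. If s possesses the Array Orthogonality Property for divisor C, then C ≤ n. -/

import Mathlib

/-- Periodic cross-correlation of two length-`R` sequences. -/
noncomputable def xcorr (R : ℕ) (a b : ℕ → ℂ) (τ : ℕ) : ℂ :=
  ∑ i ∈ Finset.range R, a i * (starRingEnd ℂ) (b ((i + τ) % R))

/-- The Array Orthogonality Property for an `R × C` array `S`. -/
def AOP (R C : ℕ) (S : ℕ → ℕ → ℂ) : Prop :=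
  (∀ τ j₀ j₁ : ℕ, j₀ < C → j₁ < C → j₀ ≠ j₁ →
      xcorr R (fun i => S i j₀) (fun i => S i j₁) τ = 0) ∧
  (∀ τ : ℕ, ¬ (R ∣ τ) →
      ∑ j ∈ Finset.range C, xcorr R (fun i => S i j) (fun i => S i j) τ = 0)

/-! Modulo `n` the value `p(i, j)` depends only on `j` modulo `n`, so column `n` of the array
repeats column `0`. At zero shift the correlation of a column with itself is its energy, which is
nonzero because powers of `ω` are nonzero; hence columns `0` and `n` cannot both occur among the
first `C`. -/

section

open MvPolynomial

theorem sModEq_mvPolynomial_eval {σ R : Type*} [CommRing R] {I : Ideal R} {v w : σ → R}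
    (h : ∀ k, v k ≡ w k [SMOD I]) (p : MvPolynomial σ R) : eval v p ≡ eval w p [SMOD I] := by
  have mk_comp_eq : Ideal.Quotient.mk I ∘ v = Ideal.Quotient.mk I ∘ w := funext h
  change Ideal.Quotient.mk I (eval v p) = Ideal.Quotient.mk I (eval w p)
  rw [map_eval, map_eval, mk_comp_eq]

theorem zpow_eq_zpow_of_dvd_sub {G : Type*} [DivisionMonoid G] {g : G} {n : ℕ} (hg : g ^ n = 1)
    {a b : ℤ} (hab : (n : ℤ) ∣ a - b) : g ^ a = g ^ b := by
  obtain rfl | hn := eq_or_ne n 0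
  · rw [Nat.cast_zero, zero_dvd_iff, sub_eq_zero] at hab
    rw [hab]
  · lift g to Gˣ using IsUnit.of_pow_eq_one hg hn
    norm_cast at hg ⊢
    have b_modEq_a : b ≡ a [ZMOD n] := Int.modEq_iff_dvd.2 hab
    have orderOf_dvd : (orderOf g : ℤ) ∣ n :=
      Int.natCast_dvd_natCast.2 (orderOf_dvd_of_pow_eq_one hg)
    exact zpow_eq_zpow_iff_modEq.2 (b_modEq_a.symm.of_dvd orderOf_dvd)

theorem periodic_zpow_eval {G : Type*} [DivisionMonoid G] {g : G} {n : ℕ} (hg : g ^ n = 1)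
    (p : MvPolynomial (Fin 2) ℤ) (i : ℤ) :
    Function.Periodic (fun j : ℤ => g ^ eval ![i, j] p) (n : ℤ) := by
  intro j
  have args_sModEq : ∀ k, ![i, j + n] k ≡ ![i, j] k [SMOD Ideal.span {(n : ℤ)}] := by
    simp [Fin.forall_fin_two, SModEq.sub_mem, Ideal.mem_span_singleton]
  have n_dvd_sub : (n : ℤ) ∣ eval ![i, j + n] p - eval ![i, j] p :=
    Ideal.mem_span_singleton.1 (SModEq.sub_mem.1 (sModEq_mvPolynomial_eval args_sModEq p))
  exact zpow_eq_zpow_of_dvd_sub hg n_dvd_sub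

theorem xcorr_self_zero (R : ℕ) (a : ℕ → ℂ) :
    xcorr R a a 0 = ((∑ i ∈ Finset.range R, ‖a i‖ ^ 2 : ℝ) : ℂ) := by
  rw [xcorr, Complex.ofReal_sum]
  refine Finset.sum_congr rfl fun i hi => ?_
  rw [add_zero, Nat.mod_eq_of_lt (Finset.mem_range.1 hi), Complex.mul_conj', Complex.ofReal_pow]

theorem xcorr_self_zero_eq_zero_iff {R : ℕ} {a : ℕ → ℂ} :
    xcorr R a a 0 = 0 ↔ ∀ i < R, a i = 0 := by
  rw [xcorr_self_zero, Complex.ofReal_eq_zero,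
    Finset.sum_eq_zero_iff_of_nonneg fun i _ => sq_nonneg ‖a i‖]
  simp only [Finset.mem_range, sq_eq_zero_iff, norm_eq_zero]

theorem aop_polynomial_column_bound_general {R C n : ℕ} (hR : 0 < R) (hn : n ≠ 0)
    (p : MvPolynomial (Fin 2) ℤ) {ω : ℂ} (hω : ω ^ n = 1) (S : ℕ → ℕ → ℂ)
    (hS : ∀ i j : ℕ, S i j = ω ^ eval ![(i : ℤ), (j : ℤ)] p)
    (horth : ∀ j₀ j₁ : ℕ, j₀ < C → j₁ < C → j₀ ≠ j₁ →
      xcorr R (fun i => S i j₀) (fun i => S i j₁) 0 = 0) : C ≤ n := by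
  by_contra! hlt
  have column_eq : (fun i => S i n) = fun i => S i 0 := by
    funext i
    simpa only [hS, Nat.cast_zero] using (periodic_zpow_eval hω p i).eq
  have self_orth : xcorr R (fun i => S i 0) (fun i => S i 0) 0 = 0 := by
    simpa only [column_eq] using horth 0 n (Nat.zero_lt_of_lt hlt) hlt hn.symm
  have entry_eq_zero : S 0 0 = 0 := xcorr_self_zero_eq_zero_iff.1 self_orth 0 hR
  have ω_ne_zero : ω ≠ 0 := (IsUnit.of_pow_eq_one hω hn).ne_zero
  exact zpow_ne_zero _ ω_ne_zero (hS 0 0 ▸ entry_eq_zero)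

end

/-- If the `R × C` array `S_{i,j} = ω^{p(i,j)}` (with `ω = e^{2πi/n}`, `p ∈ ℤ[x,y]`)
has the Array Orthogonality Property for divisor `C`, then `C ≤ n`. -/
theorem aop_polynomial_column_bound (R C n : ℕ) (hR : 0 < R) (hC : 0 < C) (hn : 0 < n)
    (p : MvPolynomial (Fin 2) ℤ)
    (ω : ℂ) (hω : ω = Complex.exp (2 * Real.pi * Complex.I / n))
    (S : ℕ → ℕ → ℂ)
    (hS : ∀ i j : ℕ, S i j = ω ^ (MvPolynomial.eval ![(i : ℤ), (j : ℤ)] p))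
    (hAOP : AOP R C S) : C ≤ n := by
  have hω_pow : ω ^ n = 1 := hω ▸ (Complex.isPrimitiveRoot_exp n hn.ne').pow_eq_one
  exact aop_polynomial_column_bound_general hR hn.ne' p hω_pow S hS (hAOP.1 0)
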